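/- arXiv:2504.11600 — 2 statements merged into one kernel-verified Lean document; each statement's English description precedes it below -/
import Mathlib

section
/- For every a ∈ 𝔻, the Möbius maps satisfy φ_{ω_a} ∘ φ_a = −φ_{ω_a} and φ_a ∘ φ_{ω_a} = −φ_{−ω_a} on 𝔻 (and hence on 𝕋). -/
open MeasureTheory Complex

noncomputable section

/-- The Möbius transformation `φ_a(z) = (a - z)/(1 - conj a * z)`. -/
def phi (a z : ℂ) : ℂ := (a - z) / (1 - (starRingEnd ℂ) a * z)

/-- `ω_a`, the unique fixed point of `φ_a` inside the unit disk:
`ω_a = (1 - √(1 - |a|²))/conj a` for `a ≠ 0`, and `ω_0 = 0`. -/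
def omegaPt (a : ℂ) : ℂ :=
  if a = 0 then 0 else (1 - Real.sqrt (1 - ‖a‖ ^ 2)) / (starRingEnd ℂ) a

/-- `Ω_a = 2a/(1 + |a|²)`, the unique point of `𝔻` whose associated
Möbius map has fixed point `a`. -/
def OmegaPt (a : ℂ) : ℂ := 2 * a / ((1 + ‖a‖ ^ 2 : ℝ) : ℂ)

/-!
The involution `φ_w` exchanges `w` and `0`, so it conjugates the involution of the disk fixing `w`
to the one fixing `0`, which is `z ↦ -z`. Hence `φ_a = φ_w ∘ (-id) ∘ φ_w` for `w = ω_a`, and both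
identities follow by composing with `φ_w` on the left or on the right.
-/

open scoped ComplexConjugate

lemma one_sub_conj_mul_ne_zero {w z : ℂ} (hw : ‖w‖ < 1) (hz : ‖z‖ ≤ 1) :
    1 - conj w * z ≠ 0 := by
  have norm_lt : ‖conj w * z‖ < 1 := by
    rw [norm_mul, norm_conj]
    exact mul_lt_one_of_nonneg_of_lt_one_left (norm_nonneg w) hw hz
  intro h
  simp [← sub_eq_zero.mp h] at norm_lt

lemma norm_one_sub_conj_mul_sq_sub_norm_sub_sq (w z : ℂ) :
    ‖1 - conj w * z‖ ^ 2 - ‖w - z‖ ^ 2 = (1 - ‖w‖ ^ 2) * (1 - ‖z‖ ^ 2) := by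
  apply Complex.ofReal_injective
  push_cast
  simp only [← mul_conj', map_sub, map_mul, map_one, conj_conj]
  ring

lemma norm_phi_le_one {w z : ℂ} (hw : ‖w‖ ≤ 1) (hz : ‖z‖ ≤ 1) : ‖phi w z‖ ≤ 1 := by
  have defect_nonneg : 0 ≤ (1 - ‖w‖ ^ 2) * (1 - ‖z‖ ^ 2) :=
    mul_nonneg (sub_nonneg.mpr (pow_le_one₀ (norm_nonneg w) hw))
      (sub_nonneg.mpr (pow_le_one₀ (norm_nonneg z) hz))
  rw [← norm_one_sub_conj_mul_sq_sub_norm_sub_sq, sub_nonneg] at defect_nonneg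
  rw [phi, norm_div]
  exact div_le_one_of_le₀ (le_of_sq_le_sq defect_nonneg (norm_nonneg _)) (norm_nonneg _)

lemma phi_neg (w z : ℂ) : phi w (-z) = -phi (-w) z := by
  simp only [phi, map_neg, ← neg_div]
  ring_nf

lemma phi_div (w x : ℂ) {y : ℂ} (hy : y ≠ 0) :
    phi w (x / y) = (w * y - x) / (y - conj w * x) := by
  rw [phi, ← mul_div_mul_right _ _ hy, sub_mul, sub_mul, one_mul, mul_assoc, div_mul_cancel₀ x hy]

lemma phi_phi {w z : ℂ} (hw : 1 - conj w * w ≠ 0) (hz : 1 - conj w * z ≠ 0) :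
    phi w (phi w z) = z := by
  rw [phi.eq_def w z, phi_div _ _ hz, div_eq_iff (by convert hw using 1; ring)]
  ring

lemma phi_phi_of_norm_lt_one {w z : ℂ} (hw : ‖w‖ < 1) (hz : ‖z‖ ≤ 1) :
    phi w (phi w z) = z :=
  phi_phi (one_sub_conj_mul_ne_zero hw hw.le) (one_sub_conj_mul_ne_zero hw hz)

lemma phi_OmegaPt_eq_div (w z : ℂ) :
    phi (OmegaPt w) z = (2 * w - (1 + conj w * w) * z) / (1 + conj w * w - 2 * conj w * z) := by
  have hs : ((1 + ‖w‖ ^ 2 : ℝ) : ℂ) ≠ 0 := ofReal_ne_zero.mpr (by positivity)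
  have hs_eq : 1 + conj w * w = ((1 + ‖w‖ ^ 2 : ℝ) : ℂ) := by
    rw [conj_mul']
    norm_cast
  rw [hs_eq, phi, OmegaPt, map_div₀, map_mul, conj_ofReal, map_ofNat, ← mul_div_mul_right _ _ hs]
  congr 1 <;> field_simp

lemma phi_OmegaPt {w z : ℂ} (hz : 1 - conj w * z ≠ 0) :
    phi (OmegaPt w) z = phi w (-phi w z) := by
  rw [phi_OmegaPt_eq_div, phi.eq_def w z, ← neg_div, phi_div _ _ hz]
  congr 1 <;> ring

lemma sq_add_sqrt_one_sub_sq_sq {x : ℝ} (hx : x ^ 2 ≤ 1) : x ^ 2 + √(1 - x ^ 2) ^ 2 = 1 := by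
  rw [Real.sq_sqrt (sub_nonneg.mpr hx), add_sub_cancel]

lemma omegaPt_eq {a : ℂ} (ha : ‖a‖ ≤ 1) :
    omegaPt a = a / ((1 + √(1 - ‖a‖ ^ 2) : ℝ) : ℂ) := by
  rcases eq_or_ne a 0 with rfl | ha₀
  · simp [omegaPt]
  have hs : ((1 + √(1 - ‖a‖ ^ 2) : ℝ) : ℂ) ≠ 0 := ofReal_ne_zero.mpr (by positivity)
  rw [omegaPt, if_neg ha₀, div_eq_div_iff ((map_ne_zero _).mpr ha₀) hs, mul_conj']
  have diff_of_squares : (1 - √(1 - ‖a‖ ^ 2)) * (1 + √(1 - ‖a‖ ^ 2)) = ‖a‖ ^ 2 := by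
    linear_combination -sq_add_sqrt_one_sub_sq_sq (pow_le_one₀ (norm_nonneg a) ha)
  exact_mod_cast diff_of_squares

lemma norm_omegaPt {a : ℂ} (ha : ‖a‖ ≤ 1) : ‖omegaPt a‖ = ‖a‖ / (1 + √(1 - ‖a‖ ^ 2)) := by
  rw [omegaPt_eq ha, norm_div, Complex.norm_of_nonneg (by positivity)]

lemma norm_omegaPt_lt_one {a : ℂ} (ha : ‖a‖ < 1) : ‖omegaPt a‖ < 1 := by
  rw [norm_omegaPt ha.le, div_lt_one (by positivity)]
  exact ha.trans_le (le_add_of_nonneg_right (Real.sqrt_nonneg _))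

lemma OmegaPt_omegaPt {a : ℂ} (ha : ‖a‖ ≤ 1) : OmegaPt (omegaPt a) = a := by
  have one_add_sq : 1 + ‖omegaPt a‖ ^ 2 = 2 / (1 + √(1 - ‖a‖ ^ 2)) := by
    rw [norm_omegaPt ha]
    field_simp
    linear_combination sq_add_sqrt_one_sub_sq_sq (pow_le_one₀ (norm_nonneg a) ha)
  have hs : ((1 + √(1 - ‖a‖ ^ 2) : ℝ) : ℂ) ≠ 0 := ofReal_ne_zero.mpr (by positivity)
  rw [OmegaPt, one_add_sq, omegaPt_eq ha, ofReal_div, ofReal_ofNat]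
  field_simp

lemma phi_eq_phi_omegaPt_neg_phi_omegaPt {a z : ℂ} (ha : ‖a‖ < 1) (hz : ‖z‖ ≤ 1) :
    phi a z = phi (omegaPt a) (-phi (omegaPt a) z) := by
  rw [← phi_OmegaPt (one_sub_conj_mul_ne_zero (norm_omegaPt_lt_one ha) hz), OmegaPt_omegaPt ha.le]

/-- For `a ∈ 𝔻`, the identities `φ_{ω_a} ∘ φ_a = -φ_{ω_a}` and
`φ_a ∘ φ_{ω_a} = -φ_{-ω_a}` hold on the closed unit disk (in particular on
`𝔻` and on `𝕋`). -/
theorem statement1 (a : ℂ) (ha : ‖a‖ < 1) (z : ℂ) (hz : ‖z‖ ≤ 1) :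
    phi (omegaPt a) (phi a z) = -phi (omegaPt a) z ∧
    phi a (phi (omegaPt a) z) = -phi (-omegaPt a) z := by
  have hω : ‖omegaPt a‖ < 1 := norm_omegaPt_lt_one ha
  have hφ : ‖phi (omegaPt a) z‖ ≤ 1 := norm_phi_le_one hω.le hz
  constructor
  · rw [phi_eq_phi_omegaPt_neg_phi_omegaPt ha hz,
      phi_phi_of_norm_lt_one hω (by rwa [norm_neg])]
  · rw [phi_eq_phi_omegaPt_neg_phi_omegaPt ha hφ, phi_phi_of_norm_lt_one hω hz, phi_neg]

end
end

section
/- Let C be a bounded linear operator on a complex Hilbert space H with C² = I. Then C*C is a positive invertible operator, and the unitary part R = C·(C*C)^{−1/2} of the polar decomposition of C satisfies R* = R, R² = I, and R C R = C*. -/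
open ContinuousLinearMap

/-!
The theorem is an instance of the uniqueness of the polar decomposition. Write `C = R S` with `R`
unitary and `S = (C*C)^{1/2}`. Since `C = C⁻¹ = S⁻¹ R* = R* (R S⁻¹ R*)` is again a product of a
unitary and a positive operator, uniqueness gives `R = R*`. Hence `R² = R* R = I`, and
`R C R = R² S R = S R = (R S)* = C*`.
-/

section StarMonoid

variable {M : Type*}

theorem star_mul_mul_self_of_star_mul_self_eq_one [Monoid M] [StarMul M] {u : M}
    (hu : star u * u = 1) (a : M) : star (u * a) * (u * a) = star a * a := by
  rw [star_mul, mul_assoc, ← mul_assoc (star u), hu, one_mul]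

theorem isUnit_of_mul_self_eq_star_mul_self [Monoid M] [StarMul M] {c s : M} (hc : IsUnit c)
    (hsc : s * s = star c * c) : IsUnit s :=
  ((Commute.refl s).isUnit_mul_iff.mp (hsc ▸ hc.star.mul hc)).1

theorem mul_ringInverse_mem_unitary [Semiring M] [StarRing M] {c s : M} (hc : IsUnit c)
    (hs : IsSelfAdjoint s) (hsc : s * s = star c * c) : c * Ring.inverse s ∈ unitary M := by
  have hs_unit : IsUnit s := isUnit_of_mul_self_eq_star_mul_self hc hsc
  rw [(hc.mul hs_unit.ringInverse).mem_unitary_iff_star_mul_self]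
  calc star (c * Ring.inverse s) * (c * Ring.inverse s)
      = Ring.inverse s * (star c * c) * Ring.inverse s := by
        rw [star_mul, hs.ringInverse.star_eq]; simp only [mul_assoc]
    _ = (Ring.inverse s * s) * (s * Ring.inverse s) := by
        rw [← hsc]; simp only [mul_assoc]
    _ = 1 := by
        rw [Ring.inverse_mul_cancel s hs_unit, Ring.mul_inverse_cancel s hs_unit, one_mul]

end StarMonoid

section CStarAlgebra

variable {A : Type*} [CStarAlgebra A] [PartialOrder A] [StarOrderedRing A]

theorem nonneg_eq_of_isometry_mul_eq {u v s t : A} (hu : star u * u = 1) (hv : star v * v = 1)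
    (hs : 0 ≤ s) (ht : 0 ≤ t) (h : u * s = v * t) : s = t := by
  refine (CFC.mul_self_eq_mul_self_iff s t hs ht).mp ?_
  calc s * s = star (u * s) * (u * s) := by
        rw [star_mul_mul_self_of_star_mul_self_eq_one hu, hs.star_eq]
    _ = star (v * t) * (v * t) := by rw [h]
    _ = t * t := by rw [star_mul_mul_self_of_star_mul_self_eq_one hv, ht.star_eq]

theorem isometry_eq_of_mul_nonneg_eq {u v s t : A} (hu : star u * u = 1) (hv : star v * v = 1)
    (hs : 0 ≤ s) (ht : 0 ≤ t) (hs_unit : IsUnit s) (h : u * s = v * t) : u = v := by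
  obtain rfl : s = t := nonneg_eq_of_isometry_mul_eq hu hv hs ht h
  exact hs_unit.mul_right_cancel h

theorem isSelfAdjoint_of_mem_unitary_of_mul_nonneg_mul_self_eq_one {u s : A} (hu : u ∈ unitary A)
    (hs : 0 ≤ s) (hus : u * s * (u * s) = 1) : IsSelfAdjoint u := by
  obtain ⟨hu_star_mul, hu_mul_star⟩ := Unitary.mem_iff.mp hu
  have mul_inv : s * (u * s * u) = 1 := by
    calc s * (u * s * u) = star u * (u * s * (u * s)) * u := by
          simp only [← mul_assoc, hu_star_mul, one_mul]
      _ = 1 := by rw [hus, mul_one, hu_star_mul]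
  have inv_mul : u * s * u * s = 1 := by rw [mul_assoc, hus]
  let S : Aˣ := ⟨s, u * s * u, mul_inv, inv_mul⟩
  have inv_nonneg : 0 ≤ u * s * u := CFC.inv_nonneg_of_nonneg S hs
  have polar : u * s = star u * (u * (u * s * u) * star u) := by
    simp only [← mul_assoc, hu_star_mul, one_mul]
    rw [mul_assoc, hu_mul_star, mul_one]
  exact (isometry_eq_of_mul_nonneg_eq hu_star_mul (by rwa [star_star]) hs
    (star_right_conjugate_nonneg inv_nonneg u) S.isUnit polar).symm

theorem statement2_general (c s : A) (hc : c * c = 1) (hs : 0 ≤ s) (hsc : s * s = star c * c) :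
    0 ≤ star c * c ∧
    IsUnit (star c * c) ∧
    IsUnit s ∧
    star (c * Ring.inverse s) = c * Ring.inverse s ∧
    (c * Ring.inverse s) * (c * Ring.inverse s) = 1 ∧
    (c * Ring.inverse s) * c * (c * Ring.inverse s) = star c := by
  have hc_unit : IsUnit c := .of_pow_eq_one (by rwa [sq]) two_ne_zero
  have hs_unit : IsUnit s := isUnit_of_mul_self_eq_star_mul_self hc_unit hsc
  have r_unitary := mul_ringInverse_mem_unitary hc_unit hs.isSelfAdjoint hsc
  have polar : c * Ring.inverse s * s = c := Ring.inverse_mul_cancel_right s c hs_unit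
  generalize c * Ring.inverse s = r at r_unitary polar ⊢
  have star_r : star r = r :=
    isSelfAdjoint_of_mem_unitary_of_mul_nonneg_mul_self_eq_one r_unitary hs (by rwa [polar])
  have r_mul_r : r * r = 1 := by simpa only [star_r] using Unitary.star_mul_self_of_mem r_unitary
  refine ⟨star_mul_self_nonneg c, hc_unit.star.mul hc_unit, hs_unit, star_r, r_mul_r, ?_⟩
  calc r * c * r = r * (r * s) * r := by rw [polar]
    _ = s * r := by rw [← mul_assoc, r_mul_r, one_mul]
    _ = star (r * s) := by rw [star_mul, hs.star_eq, star_r]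
    _ = star c := by rw [polar]

end CStarAlgebra

/-- Let `C` be a bounded linear operator on a complex Hilbert space with
`C² = I`, and let `S` be the positive square root of `C*C` (i.e. `S ≥ 0` and
`S·S = C*C`).  Then `C*C` is positive and invertible, `S` is invertible, and
the unitary part `R = C·(C*C)^{-1/2} = C·S⁻¹` of the polar decomposition of
`C` satisfies `R* = R`, `R² = I`, and `R C R = C*`. -/
theorem statement2 {H : Type*} [NormedAddCommGroup H] [InnerProductSpace ℂ H]
    [CompleteSpace H] (C S : H →L[ℂ] H) (hC : C * C = 1)
    (hSpos : S.IsPositive) (hSsq : S * S = adjoint C * C) :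
    (adjoint C * C).IsPositive ∧
    IsUnit (adjoint C * C) ∧
    IsUnit S ∧
    adjoint (C * Ring.inverse S) = C * Ring.inverse S ∧
    (C * Ring.inverse S) * (C * Ring.inverse S) = 1 ∧
    (C * Ring.inverse S) * C * (C * Ring.inverse S) = adjoint C := by
  simpa only [← nonneg_iff_isPositive, star_eq_adjoint] using
    statement2_general C S hC ((nonneg_iff_isPositive S).mpr hSpos) hSsq
end
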